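/- Let m ∼ N(μ, Σ) on ℝⁿ with Σ positive definite, v a selection vector, y ∈ {-1,1}, z = y v'μ/√(v'Σv + 1), η = Φ(z), and let μ⁺ be the posterior mean μ + yΣv φ(z)/(η√(v'Σv+1)). Then the covariance of the probit-tilted posterior p(m) ∝ φ(m; μ, Σ)Φ(y v'm) equals Σ − (μ⁺ − μ)(μ⁺ − μ)' − y Σv v'Σ · φ(z)(v'μ)/(η (v'Σv + 1)^{3/2}). -/

import Mathlib

open MeasureTheory Matrix

noncomputable def stdPdf (x : ℝ) : ℝ :=
  (Real.sqrt (2 * Real.pi))⁻¹ * Real.exp (-x ^ 2 / 2)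

noncomputable def stdCdf (x : ℝ) : ℝ := ∫ u in Set.Iic x, stdPdf u

noncomputable def mvPdf {n : ℕ} (μ : Fin n → ℝ) (S : Matrix (Fin n) (Fin n) ℝ)
    (x : Fin n → ℝ) : ℝ :=
  (Real.sqrt ((2 * Real.pi) ^ n * S.det))⁻¹ *
    Real.exp (-(1 / 2) * ((x - μ) ⬝ᵥ (S⁻¹ *ᵥ (x - μ))))

open ProbabilityTheory
open scoped ENNReal MatrixOrder

/-!
Let `w = y v`. If `u` is a standard normal variable independent of `m`, then `Φ(w'm)` is the
conditional probability of `u ≤ w'm` given `m`, so the tilted posterior is the law of `m`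
conditioned on that event. Standardizing `u - w'm` to a variable `G` turns the event into `G ≤ z`.
The residual `m - cov(m, G) G` is independent of `G`, hence unaffected by the conditioning: only
the contribution of `G` changes, its mean from `0` to `-λ` and its variance from `1` to
`1 - zλ - λ²`, where `λ = φ(z)/Φ(z)`. Since `cov(m, G) = -Σw/√(w'Σw + 1)`, this yields the mean
`μ + λΣw/√(w'Σw + 1)` and the covariance `Σ - (zλ + λ²) Σww'Σ/(w'Σw + 1)`.
-/

section Conditioning

variable {Ω : Type*} [MeasurableSpace Ω] {P : Measure Ω}

lemma integral_cond {E : Type*} [NormedAddCommGroup E] [NormedSpace ℝ E] (s : Set Ω) (f : Ω → E) :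
    ∫ ω, f ω ∂P[|s] = (P.real s)⁻¹ • ∫ ω in s, f ω ∂P := by
  rw [ProbabilityTheory.cond, integral_smul_measure, ENNReal.toReal_inv, measureReal_def]

lemma memLp_cond {E : Type*} [NormedAddCommGroup E] {p : ℝ≥0∞} {f : Ω → E} (hf : MemLp f p P)
    {s : Set Ω} (hs : P s ≠ 0) : MemLp f p P[|s] :=
  (hf.restrict s).smul_measure (ENNReal.inv_ne_top.2 hs)

lemma integrable_cond {E : Type*} [NormedAddCommGroup E] {f : Ω → E} (hf : Integrable f P)
    {s : Set Ω} (hs : P s ≠ 0) : Integrable f P[|s] :=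
  memLp_one_iff_integrable.1 (memLp_cond (memLp_one_iff_integrable.2 hf) hs)

variable {E F : Type*} [MeasurableSpace E] [MeasurableSpace F] {R : Ω → E} {G : Ω → F} {s : Set F}

lemma map_cond_preimage (hG : Measurable G) (hs : MeasurableSet s) :
    P[|G ⁻¹' s].map G = (P.map G)[|s] := by
  ext t ht
  rw [Measure.map_apply hG ht, cond_apply (hG hs), cond_apply hs, Measure.map_apply hG hs,
    Measure.map_apply hG (hs.inter ht), Set.preimage_inter]

lemma cond_preimage_apply_of_indepFun [IsFiniteMeasure P] (hRG : IndepFun R G P)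
    (hG : Measurable G) (hs : MeasurableSet s) (h0 : P (G ⁻¹' s) ≠ 0) {t : Set E}
    (ht : MeasurableSet t) : P[|G ⁻¹' s] (R ⁻¹' t) = P (R ⁻¹' t) := by
  rw [cond_apply (hG hs), Set.inter_comm,
    indepFun_iff_measure_inter_preimage_eq_mul.1 hRG t s ht hs, mul_comm, mul_assoc,
    ENNReal.mul_inv_cancel h0 (measure_ne_top _ _), mul_one]

lemma indepFun_cond_preimage [IsFiniteMeasure P] (hRG : IndepFun R G P)
    (hG : Measurable G) (hs : MeasurableSet s) (h0 : P (G ⁻¹' s) ≠ 0) :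
    IndepFun R G P[|G ⁻¹' s] := by
  refine indepFun_iff_measure_inter_preimage_eq_mul.2 fun t u ht hu => ?_
  rw [cond_preimage_apply_of_indepFun hRG hG hs h0 ht, cond_apply (hG hs), cond_apply (hG hs),
    Set.inter_left_comm, ← Set.preimage_inter,
    indepFun_iff_measure_inter_preimage_eq_mul.1 hRG t (s ∩ u) ht (hs.inter hu)]
  ring

lemma identDistrib_cond_preimage [IsFiniteMeasure P] (hRG : IndepFun R G P)
    (hR : AEMeasurable R P) (hG : Measurable G) (hs : MeasurableSet s)
    (h0 : P (G ⁻¹' s) ≠ 0) : IdentDistrib R R P[|G ⁻¹' s] P where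
  aemeasurable_fst := hR.mono_ac cond_absolutelyContinuous
  aemeasurable_snd := hR
  map_eq := by
    ext t ht
    rw [Measure.map_apply_of_aemeasurable (hR.mono_ac cond_absolutelyContinuous) ht,
      Measure.map_apply_of_aemeasurable hR ht, cond_preimage_apply_of_indepFun hRG hG hs h0 ht]

end Conditioning

section Selection

lemma covariance_eq_of_identDistrib {Ω Ω' : Type*} [MeasurableSpace Ω] [MeasurableSpace Ω']
    {P : Measure Ω} {P' : Measure Ω'} {X Y : Ω → ℝ} {X' Y' : Ω' → ℝ}
    (h : IdentDistrib (fun ω => (X ω, Y ω)) (fun ω => (X' ω, Y' ω)) P P') :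
    cov[X, Y; P] = cov[X', Y'; P'] := by
  rw [← covariance_map_fun (X := Prod.fst) (Y := Prod.snd) (by fun_prop) (by fun_prop)
      h.aemeasurable_fst, h.map_eq, covariance_map_fun (by fun_prop) (by fun_prop)
      h.aemeasurable_snd]

variable {Ω : Type*} [MeasurableSpace Ω] {P : Measure Ω} [IsProbabilityMeasure P]
  {X Y G : Ω → ℝ} {a b : ℝ} {s : Set ℝ}

lemma covariance_eq_add_of_indepFun (hX : MemLp X 2 P) (hY : MemLp Y 2 P) (hG : MemLp G 2 P)
    (h : IndepFun (fun ω => (X ω - a * G ω, Y ω - b * G ω)) G P) :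
    cov[X, Y; P] =
      cov[fun ω => X ω - a * G ω, fun ω => Y ω - b * G ω; P] + a * b * Var[G; P] := by
  have hXG : cov[fun ω => X ω - a * G ω, G; P] = 0 :=
    (h.comp measurable_fst measurable_id).covariance_eq_zero (hX.sub (hG.const_mul a)) hG
  have hYG : cov[fun ω => Y ω - b * G ω, G; P] = 0 :=
    (h.comp measurable_snd measurable_id).covariance_eq_zero (hY.sub (hG.const_mul b)) hG
  rw [covariance_fun_sub_left hX (hG.const_mul a) hG, covariance_const_mul_left,
    covariance_self hG.aemeasurable, sub_eq_zero] at hXG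
  rw [covariance_fun_sub_left hY (hG.const_mul b) hG, covariance_const_mul_left,
    covariance_self hG.aemeasurable, sub_eq_zero] at hYG
  rw [covariance_fun_sub_fun_sub hX (hG.const_mul a) hY (hG.const_mul b)]
  simp only [covariance_const_mul_left, covariance_const_mul_right, covariance_comm G Y, hXG, hYG,
    covariance_self hG.aemeasurable]
  ring

lemma integral_cond_preimage_of_indepFun (hX : Integrable X P) (hG : Integrable G P)
    (hGm : Measurable G) (h : IndepFun (fun ω => X ω - a * G ω) G P) (hs : MeasurableSet s)
    (h0 : P (G ⁻¹' s) ≠ 0) :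
    ∫ ω, X ω ∂P[|G ⁻¹' s] =
      ∫ ω, X ω ∂P + a * (∫ ω, G ω ∂P[|G ⁻¹' s] - ∫ ω, G ω ∂P) := by
  have hR : Integrable (fun ω => X ω - a * G ω) P := hX.sub (hG.const_mul a)
  have hident := (identDistrib_cond_preimage h hR.aemeasurable hGm hs h0).integral_eq
  rw [integral_sub hX (hG.const_mul a),
    integral_sub (integrable_cond hX h0) ((integrable_cond hG h0).const_mul a),
    integral_const_mul, integral_const_mul] at hident
  linarith

lemma covariance_cond_preimage_of_indepFun (hX : MemLp X 2 P) (hY : MemLp Y 2 P)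
    (hG : MemLp G 2 P) (hGm : Measurable G)
    (h : IndepFun (fun ω => (X ω - a * G ω, Y ω - b * G ω)) G P) (hs : MeasurableSet s)
    (h0 : P (G ⁻¹' s) ≠ 0) :
    cov[X, Y; P[|G ⁻¹' s]] = cov[X, Y; P] + a * b * (Var[G; P[|G ⁻¹' s]] - Var[G; P]) := by
  have := cond_isProbabilityMeasure h0
  have hR : AEMeasurable (fun ω => (X ω - a * G ω, Y ω - b * G ω)) P :=
    (hX.sub (hG.const_mul a)).aemeasurable.prodMk (hY.sub (hG.const_mul b)).aemeasurable
  have hident := identDistrib_cond_preimage h hR hGm hs h0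
  have hresidual : cov[fun ω => X ω - a * G ω, fun ω => Y ω - b * G ω; P[|G ⁻¹' s]] =
      cov[fun ω => X ω - a * G ω, fun ω => Y ω - b * G ω; P] :=
    covariance_eq_of_identDistrib hident
  rw [covariance_eq_add_of_indepFun (memLp_cond hX h0) (memLp_cond hY h0) (memLp_cond hG h0)
    (indepFun_cond_preimage h hGm hs h0), hresidual, covariance_eq_add_of_indepFun hX hY hG h]
  ring

end Selection

section StandardNormal

lemma stdPdf_eq_gaussianPDFReal : stdPdf = gaussianPDFReal 0 1 := by
  ext x
  simp [stdPdf, gaussianPDFReal]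

lemma stdPdf_pos (x : ℝ) : 0 < stdPdf x := by
  unfold stdPdf
  positivity

lemma hasDerivAt_stdPdf (x : ℝ) : HasDerivAt stdPdf (-(x * stdPdf x)) x := by
  have h := (((hasDerivAt_pow 2 x).neg.div_const 2).exp).const_mul (√(2 * Real.pi))⁻¹
  refine h.congr_deriv ?_
  simp only [stdPdf, Pi.neg_apply]
  push_cast
  ring

lemma integrable_pow_mul_stdPdf (k : ℕ) : Integrable fun x => x ^ k * stdPdf x := by
  have hk : (-1 : ℝ) < k := by linarith [k.cast_nonneg (α := ℝ)]
  have h := (integrable_rpow_mul_exp_neg_mul_sq one_half_pos hk).const_mul (√(2 * Real.pi))⁻¹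
  refine h.congr (ae_of_all _ fun x => ?_)
  simp only [Real.rpow_natCast, stdPdf, show -(1 / 2) * x ^ 2 = -x ^ 2 / 2 by ring]
  ring

lemma integrable_stdPdf : Integrable stdPdf := by
  simpa using integrable_pow_mul_stdPdf 0

lemma integrable_mul_stdPdf : Integrable fun x => x * stdPdf x := by
  simpa using integrable_pow_mul_stdPdf 1

lemma setIntegral_Iic_mul_stdPdf (z : ℝ) : ∫ x in Set.Iic z, x * stdPdf x = -stdPdf z := by
  have hint : IntegrableOn (fun x => -(x * stdPdf x)) (Set.Iic z) :=
    integrable_mul_stdPdf.neg.integrableOn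
  have h := integral_Iic_of_hasDerivAt_of_tendsto' (fun x _ => hasDerivAt_stdPdf x) hint
    (tendsto_zero_of_hasDerivAt_of_integrableOn_Iic (fun x _ => hasDerivAt_stdPdf x) hint
      integrable_stdPdf.integrableOn)
  rw [integral_neg] at h
  linarith

lemma setIntegral_Iic_sq_mul_stdPdf (z : ℝ) :
    ∫ x in Set.Iic z, x ^ 2 * stdPdf x = stdCdf z - z * stdPdf z := by
  have hderiv (x : ℝ) : HasDerivAt (fun x => x * stdPdf x) (stdPdf x - x ^ 2 * stdPdf x) x :=
    ((hasDerivAt_id' x).mul (hasDerivAt_stdPdf x)).congr_deriv (by ring)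
  have hint : IntegrableOn (fun x => stdPdf x - x ^ 2 * stdPdf x) (Set.Iic z) :=
    (integrable_stdPdf.sub (integrable_pow_mul_stdPdf 2)).integrableOn
  have h := integral_Iic_of_hasDerivAt_of_tendsto' (fun x _ => hderiv x) hint
    (tendsto_zero_of_hasDerivAt_of_integrableOn_Iic (fun x _ => hderiv x) hint
      integrable_mul_stdPdf.integrableOn)
  rw [integral_sub integrable_stdPdf.integrableOn
    (integrable_pow_mul_stdPdf 2).integrableOn] at h
  rw [stdCdf]
  linarith

lemma stdCdf_pos (z : ℝ) : 0 < stdCdf z := by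
  have hsupp : Function.support stdPdf = Set.univ :=
    Set.eq_univ_of_forall fun x => (stdPdf_pos x).ne'
  rw [stdCdf, setIntegral_pos_iff_support_of_nonneg_ae (ae_of_all _ fun x => (stdPdf_pos x).le)
    integrable_stdPdf.integrableOn]
  simp [hsupp]

lemma setIntegral_gaussianReal_eq_mul_stdPdf {s : Set ℝ} (hs : MeasurableSet s) (f : ℝ → ℝ) :
    ∫ x in s, f x ∂gaussianReal 0 1 = ∫ x in s, f x * stdPdf x := by
  rw [← integral_indicator hs, integral_gaussianReal_eq_integral_smul one_ne_zero,
    ← integral_indicator hs]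
  refine integral_congr_ae (ae_of_all _ fun x => ?_)
  by_cases hx : x ∈ s <;> simp [hx, stdPdf_eq_gaussianPDFReal, mul_comm]

lemma measureReal_gaussianReal_Iic (z : ℝ) : (gaussianReal 0 1).real (Set.Iic z) = stdCdf z := by
  simpa [stdCdf] using setIntegral_gaussianReal_eq_mul_stdPdf (measurableSet_Iic (a := z))
    fun _ => 1

lemma measurable_stdCdf : Measurable stdCdf := by
  have hmono : Monotone stdCdf := fun a b hab => by
    simpa only [measureReal_gaussianReal_Iic] using
      measureReal_mono (μ := gaussianReal 0 1) (Set.Iic_subset_Iic.2 hab)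
  exact hmono.measurable

lemma gaussianReal_Iic_ne_zero (z : ℝ) : gaussianReal 0 1 (Set.Iic z) ≠ 0 := by
  refine fun h => (stdCdf_pos z).ne' ?_
  rw [← measureReal_gaussianReal_Iic, measureReal_def, h, ENNReal.toReal_zero]

/-- The inverse Mills ratio `φ(z)/Φ(z)`, the negative of the mean of a standard normal variable
conditioned to be at most `z`. -/
noncomputable def invMills (z : ℝ) : ℝ := stdPdf z / stdCdf z

lemma integral_id_cond_gaussianReal_Iic (z : ℝ) :
    ∫ x, x ∂(gaussianReal 0 1)[|Set.Iic z] = -invMills z := by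
  rw [integral_cond, setIntegral_gaussianReal_eq_mul_stdPdf measurableSet_Iic,
    setIntegral_Iic_mul_stdPdf, measureReal_gaussianReal_Iic, smul_eq_mul, invMills]
  ring

lemma variance_id_cond_gaussianReal_Iic (z : ℝ) :
    Var[id; (gaussianReal 0 1)[|Set.Iic z]] = 1 - z * invMills z - invMills z ^ 2 := by
  have := cond_isProbabilityMeasure (gaussianReal_Iic_ne_zero z)
  have hmem : MemLp id 2 (gaussianReal 0 1)[|Set.Iic z] :=
    memLp_cond (memLp_id_gaussianReal 2) (gaussianReal_Iic_ne_zero z)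
  have hsq : ∫ x, x ^ 2 ∂(gaussianReal 0 1)[|Set.Iic z] = 1 - z * invMills z := by
    rw [integral_cond, setIntegral_gaussianReal_eq_mul_stdPdf measurableSet_Iic,
      setIntegral_Iic_sq_mul_stdPdf, measureReal_gaussianReal_Iic, smul_eq_mul, invMills]
    field_simp [(stdCdf_pos z).ne']
  rw [variance_eq_sub hmem]
  simp only [Pi.pow_apply, id_eq, hsq, integral_id_cond_gaussianReal_Iic]
  ring

end StandardNormal

section GaussianResidual

variable {Ω ι : Type*} [MeasurableSpace Ω] [Finite ι] {P : Measure Ω} {X : Ω → ι → ℝ} {G : Ω → ℝ}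

lemma indepFun_sub_covariance_mul_of_hasGaussianLaw
    (h : HasGaussianLaw (fun ω => (X ω, G ω)) P) (hG : Var[G; P] = 1) :
    IndepFun (fun ω i => X ω i - cov[fun ω => X ω i, G; P] * G ω) G P := by
  have := Fintype.ofFinite ι
  have := h.isProbabilityMeasure
  set β : ι → ℝ := fun i => cov[fun ω => X ω i, G; P]
  have hX2 (i : ι) : MemLp (fun ω => X ω i) 2 P := (h.fst.eval i).memLp_two
  have hG2 : MemLp G 2 P := h.snd.memLp_two
  let L : (ι → ℝ) × ℝ →L[ℝ] (ι → ℝ) × (Unit → ℝ) :=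
    (ContinuousLinearMap.fst ℝ (ι → ℝ) ℝ - (ContinuousLinearMap.snd ℝ (ι → ℝ) ℝ).smulRight β).prod
      (ContinuousLinearMap.pi fun _ => ContinuousLinearMap.snd ℝ (ι → ℝ) ℝ)
  have hjoint : HasGaussianLaw
      (fun ω => ((fun i => X ω i - β i * G ω), fun _ : Unit => G ω)) P := by
    convert! h.map L using 1
    ext ω i <;> simp [L, mul_comm]
  have huncorr (i : ι) : cov[fun ω => X ω i - β i * G ω, G; P] = 0 := by
    rw [covariance_fun_sub_left (hX2 i) (hG2.const_mul _) hG2, covariance_const_mul_left,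
      covariance_self hG2.aemeasurable, hG, mul_one, sub_self]
  exact (hjoint.indepFun_of_covariance_eval fun i _ => huncorr i).comp measurable_id
    (measurable_pi_apply ())

lemma variance_cond_preimage_Iic_of_hasLaw (hGm : Measurable G)
    (hG : HasLaw G (gaussianReal 0 1) P) (z : ℝ) :
    Var[G; P[|G ⁻¹' Set.Iic z]] = 1 - z * invMills z - invMills z ^ 2 := by
  rw [← variance_id_cond_gaussianReal_Iic, ← hG.map_eq, ← map_cond_preimage hGm measurableSet_Iic,
    variance_id_map hGm.aemeasurable]

lemma integral_cond_preimage_Iic_of_hasLaw (hGm : Measurable G)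
    (hG : HasLaw G (gaussianReal 0 1) P) (z : ℝ) :
    ∫ ω, G ω ∂P[|G ⁻¹' Set.Iic z] = -invMills z := by
  rw [← integral_id_cond_gaussianReal_Iic, ← hG.map_eq, ← map_cond_preimage hGm measurableSet_Iic,
    integral_map hGm.aemeasurable (by fun_prop)]

lemma measure_preimage_Iic_ne_zero_of_hasLaw (hGm : Measurable G)
    (hG : HasLaw G (gaussianReal 0 1) P) (z : ℝ) : P (G ⁻¹' Set.Iic z) ≠ 0 := by
  rw [← Measure.map_apply hGm measurableSet_Iic, hG.map_eq]
  exact gaussianReal_Iic_ne_zero z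

lemma integral_cond_preimage_Iic_of_hasGaussianLaw (h : HasGaussianLaw (fun ω => (X ω, G ω)) P)
    (hGm : Measurable G) (hG : HasLaw G (gaussianReal 0 1) P) (z : ℝ) (i : ι) :
    ∫ ω, X ω i ∂P[|G ⁻¹' Set.Iic z] =
      ∫ ω, X ω i ∂P - cov[fun ω => X ω i, G; P] * invMills z := by
  have := Fintype.ofFinite ι
  have := h.isProbabilityMeasure
  have hvar : Var[G; P] = 1 := by simp [hG.variance_eq]
  have hmean : ∫ ω, G ω ∂P = 0 := by simp [hG.integral_eq]
  have hindep := (indepFun_sub_covariance_mul_of_hasGaussianLaw h hvar).comp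
    (measurable_pi_apply i) measurable_id
  rw [integral_cond_preimage_of_indepFun ((h.fst.eval i).memLp_two.integrable one_le_two)
    (h.snd.memLp_two.integrable one_le_two) hGm hindep measurableSet_Iic
    (measure_preimage_Iic_ne_zero_of_hasLaw hGm hG z),
    integral_cond_preimage_Iic_of_hasLaw hGm hG, hmean]
  ring

lemma covariance_cond_preimage_Iic_of_hasGaussianLaw (h : HasGaussianLaw (fun ω => (X ω, G ω)) P)
    (hGm : Measurable G) (hG : HasLaw G (gaussianReal 0 1) P) (z : ℝ) (i j : ι) :
    cov[fun ω => X ω i, fun ω => X ω j; P[|G ⁻¹' Set.Iic z]] =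
      cov[fun ω => X ω i, fun ω => X ω j; P] - cov[fun ω => X ω i, G; P] *
        cov[fun ω => X ω j, G; P] * (z * invMills z + invMills z ^ 2) := by
  have := Fintype.ofFinite ι
  have := h.isProbabilityMeasure
  have hvar : Var[G; P] = 1 := by simp [hG.variance_eq]
  have hindep := (indepFun_sub_covariance_mul_of_hasGaussianLaw h hvar).comp
    ((measurable_pi_apply i).prodMk (measurable_pi_apply j)) measurable_id
  rw [covariance_cond_preimage_of_indepFun (h.fst.eval i).memLp_two (h.fst.eval j).memLp_two
    h.snd.memLp_two hGm hindep measurableSet_Iic (measure_preimage_Iic_ne_zero_of_hasLaw hGm hG z),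
    variance_cond_preimage_Iic_of_hasLaw hGm hG, hvar]
  ring

end GaussianResidual

section Fubini

lemma setIntegral_prod_comp_fst {α β : Type*} [MeasurableSpace α] [MeasurableSpace β]
    {μ : Measure α} {ν : Measure β} [SFinite μ] [IsFiniteMeasure ν] {f : α → ℝ}
    (hf : Integrable f μ) {s : Set (α × β)} (hs : MeasurableSet s) :
    ∫ p in s, f p.1 ∂μ.prod ν = ∫ x, f x * ν.real (Prod.mk x ⁻¹' s) ∂μ := by
  rw [← integral_indicator hs, integral_prod _ ((hf.comp_fst ν).indicator hs)]
  refine integral_congr_ae (ae_of_all _ fun x => ?_)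
  have hx : ∀ y, s.indicator (fun p => f p.1) (x, y) =
      (Prod.mk x ⁻¹' s).indicator (fun _ => f x) y := fun y => rfl
  simp only [hx]
  rw [integral_indicator_const _ (measurable_prodMk_left hs), smul_eq_mul, mul_comm]

end Fubini

section Density

lemma pi_withDensity_ofReal {ι : Type*} [Fintype ι] {α : ι → Type*} [∀ i, MeasurableSpace (α i)]
    {ν : ∀ i, Measure (α i)} [∀ i, SigmaFinite (ν i)] {f : ∀ i, α i → ℝ}
    (hf : ∀ i, Integrable (f i) (ν i)) (hf0 : ∀ i x, 0 ≤ f i x) :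
    Measure.pi (fun i => (ν i).withDensity fun x => ENNReal.ofReal (f i x)) =
      (Measure.pi ν).withDensity fun x => ENNReal.ofReal (∏ i, f i (x i)) := by
  have (i : ι) := isFiniteMeasure_withDensity_ofReal (hf i).hasFiniteIntegral
  refine Measure.pi_eq fun s hs => ?_
  rw [withDensity_apply _ (.univ_pi hs), Measure.restrict_pi_pi,
    ← ofReal_integral_eq_lintegral_ofReal
      (Integrable.fintype_prod_dep fun i => (hf i).integrableOn)
      (ae_of_all _ fun x => Finset.prod_nonneg fun i _ => hf0 i _),
    integral_fintype_prod_eq_prod,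
    ENNReal.ofReal_prod_of_nonneg fun i _ => integral_nonneg (hf0 i)]
  refine Finset.prod_congr rfl fun i _ => ?_
  rw [withDensity_apply _ (hs i),
    ofReal_integral_eq_lintegral_ofReal (hf i).integrableOn (ae_of_all _ (hf0 i))]

lemma map_withDensity_comp {α β : Type*} [MeasurableSpace α] [MeasurableSpace β] {ν : Measure α}
    {T : α → β} (hT : Measurable T) {g : β → ℝ≥0∞} (hg : Measurable g) :
    (ν.withDensity (g ∘ T)).map T = (ν.map T).withDensity g := by
  ext s hs
  rw [Measure.map_apply hT hs, withDensity_apply _ (hT hs), withDensity_apply _ hs,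
    setLIntegral_map hs hg hT]
  rfl

lemma pi_gaussianReal_eq_withDensity (ι : Type*) [Fintype ι] :
    Measure.pi (fun _ : ι => gaussianReal 0 1) =
      volume.withDensity fun x => ENNReal.ofReal (∏ i, stdPdf (x i)) := by
  rw [volume_pi, ← pi_withDensity_ofReal (fun _ => integrable_stdPdf) fun _ x => (stdPdf_pos x).le,
    gaussianReal_of_var_ne_zero _ one_ne_zero, stdPdf_eq_gaussianPDFReal]
  rfl

variable {n : ℕ} (μ : Fin n → ℝ)

lemma prod_stdPdf (x : Fin n → ℝ) :
    ∏ i, stdPdf (x i) = (√((2 * Real.pi) ^ n))⁻¹ * Real.exp (-(1 / 2) * (x ⬝ᵥ x)) := by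
  have hexp : -(1 / 2) * (x ⬝ᵥ x) = ∑ i, -x i ^ 2 / 2 := by
    rw [dotProduct, Finset.mul_sum]
    exact Finset.sum_congr rfl fun i _ => by ring
  have hsqrt : √((2 * Real.pi) ^ n) = √(2 * Real.pi) ^ n := by
    rw [Real.sqrt_eq_iff_mul_self_eq (by positivity) (by positivity), ← mul_pow,
      Real.mul_self_sqrt (by positivity)]
  simp only [stdPdf, Finset.prod_mul_distrib, Finset.prod_const, Finset.card_univ,
    Fintype.card_fin, inv_pow, ← Real.exp_sum, hsqrt, hexp]

variable {A : Matrix (Fin n) (Fin n) ℝ}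

lemma abs_det_mul_mvPdf_add_mulVec (hA : A.det ≠ 0) (x : Fin n → ℝ) :
    |A.det| * mvPdf μ (A * Aᵀ) (μ + A *ᵥ x) = ∏ i, stdPdf (x i) := by
  have hquad : (A *ᵥ x) ⬝ᵥ ((A * Aᵀ)⁻¹ *ᵥ (A *ᵥ x)) = x ⬝ᵥ x := by
    rw [mulVec_mulVec, Matrix.mul_inv_rev, Matrix.mul_assoc, nonsing_inv_mul _ hA.isUnit,
      Matrix.mul_one, dotProduct_mulVec, ← transpose_nonsing_inv, vecMul_transpose, mulVec_mulVec,
      nonsing_inv_mul _ hA.isUnit, one_mulVec]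
  have habs : |A.det| ≠ 0 := abs_ne_zero.2 hA
  rw [prod_stdPdf, mvPdf, add_sub_cancel_left, hquad, det_mul, det_transpose,
    Real.sqrt_mul (by positivity), Real.sqrt_mul_self_eq_abs]
  field_simp

lemma measurable_mvPdf (S : Matrix (Fin n) (Fin n) ℝ) : Measurable (mvPdf μ S) := by
  unfold mvPdf
  exact Continuous.measurable (by fun_prop)

lemma map_add_mulVec_smul_volume (hA : A.det ≠ 0) :
    (ENNReal.ofReal |A.det| • volume).map (fun x => μ + A *ᵥ x) = volume := by
  have hcomp : (fun x => μ + A *ᵥ x) = (μ + ·) ∘ toLin' A := rfl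
  have hdet : ENNReal.ofReal |A.det| * ENNReal.ofReal |A.det⁻¹| = 1 := by
    rw [← ENNReal.ofReal_mul (abs_nonneg _), ← abs_mul, mul_inv_cancel₀ hA, abs_one,
      ENNReal.ofReal_one]
  rw [hcomp, ← Measure.map_map (measurable_const_add μ)
      (LinearMap.continuous_of_finiteDimensional _).measurable, Measure.map_smul,
    Real.map_matrix_volume_pi_eq_smul_volume_pi hA, smul_smul, hdet, one_smul,
    map_add_left_eq_self]

lemma map_pi_gaussianReal_add_mulVec (hA : A.det ≠ 0) :
    (Measure.pi fun _ => gaussianReal 0 1).map (fun x => μ + A *ᵥ x) =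
      volume.withDensity fun m => ENNReal.ofReal (mvPdf μ (A * Aᵀ) m) := by
  have hg := (measurable_mvPdf μ (A * Aᵀ)).ennreal_ofReal
  have hdensity : (fun x => ENNReal.ofReal (∏ i, stdPdf (x i))) = ENNReal.ofReal |A.det| •
      ((fun m => ENNReal.ofReal (mvPdf μ (A * Aᵀ) m)) ∘ fun x => μ + A *ᵥ x) := by
    ext x
    rw [← abs_det_mul_mvPdf_add_mulVec μ hA, ENNReal.ofReal_mul (abs_nonneg _)]
    rfl
  have hT : Measurable fun x => μ + A *ᵥ x := by fun_prop
  rw [pi_gaussianReal_eq_withDensity, hdensity, withDensity_smul _ (hg.comp hT),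
    ← withDensity_smul_measure, map_withDensity_comp hT hg, map_add_mulVec_smul_volume μ hA]

lemma map_ofLp_multivariateGaussian {S : Matrix (Fin n) (Fin n) ℝ} (hS : S.PosDef) :
    (multivariateGaussian (WithLp.toLp 2 μ) S).map WithLp.ofLp =
      volume.withDensity fun m => ENNReal.ofReal (mvPdf μ S m) := by
  set A := CFC.sqrt S
  have hsymm : Aᵀ = A := by
    rw [← conjTranspose_eq_transpose_of_trivial]
    exact (CFC.sqrt_nonneg S).isSelfAdjoint
  have hAA : A * Aᵀ = S := by rw [hsymm, CFC.sqrt_mul_sqrt_self S hS.posSemidef.nonneg]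
  have hA : A.det ≠ 0 := fun h => hS.det_pos.ne' (by rw [← hAA, det_mul, h, zero_mul])
  rw [← hAA, ← map_pi_gaussianReal_add_mulVec μ hA, hAA, multivariateGaussian,
    ← map_pi_eq_stdGaussian, Measure.map_map (by fun_prop) (by fun_prop),
    Measure.map_map (by fun_prop) (by fun_prop)]
  rfl

lemma mvPdf_nonneg (S : Matrix (Fin n) (Fin n) ℝ) (m : Fin n → ℝ) : 0 ≤ mvPdf μ S m := by
  unfold mvPdf
  positivity

lemma integral_mvPdf_mul {S : Matrix (Fin n) (Fin n) ℝ} (hS : S.PosDef) {f : (Fin n → ℝ) → ℝ}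
    (hf : Measurable f) : ∫ m, mvPdf μ S m * f m =
      ∫ x, f x.ofLp ∂multivariateGaussian (WithLp.toLp 2 μ) S := by
  rw [← integral_map (by fun_prop) hf.aestronglyMeasurable, map_ofLp_multivariateGaussian μ hS,
    integral_withDensity_eq_integral_toReal_smul (measurable_mvPdf μ S).ennreal_ofReal
      (ae_of_all _ fun _ => ENNReal.ofReal_lt_top)]
  simp only [ENNReal.toReal_ofReal (mvPdf_nonneg μ S _), smul_eq_mul]

end Density

section MultivariateGaussian

lemma hasGaussianLaw_add_const {Ω E : Type*} [MeasurableSpace Ω] {P : Measure Ω}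
    [NormedAddCommGroup E] [NormedSpace ℝ E] [MeasurableSpace E] [BorelSpace E] {X : Ω → E}
    (hX : HasGaussianLaw X P) (c : E) :
    HasGaussianLaw (fun ω => X ω + c) P := by
  have := hX.isGaussian_map
  refine ⟨?_⟩
  rw [show (fun ω => X ω + c) = (· + c) ∘ X from rfl,
    ← AEMeasurable.map_map_of_aemeasurable (by fun_prop) hX.aemeasurable]
  infer_instance

variable {ι : Type*} [Fintype ι] [DecidableEq ι] (S : Matrix ι ι ℝ) (c : EuclideanSpace ℝ ι)
  (u w : ι → ℝ)

lemma integral_dotProduct_multivariateGaussian :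
    ∫ x, u ⬝ᵥ x.ofLp ∂multivariateGaussian c S = u ⬝ᵥ c.ofLp := by
  have h := (innerSL ℝ (WithLp.toLp 2 u)).integral_comp_id_comm
    (IsGaussian.integrable_id (μ := multivariateGaussian c S))
  rw [integral_id_multivariateGaussian] at h
  simpa [EuclideanSpace.inner_eq_star_dotProduct, dotProduct_comm] using h

lemma memLp_dotProduct_multivariateGaussian :
    MemLp (fun x => u ⬝ᵥ x.ofLp) 2 (multivariateGaussian c S) := by
  have h : HasGaussianLaw id (multivariateGaussian c S) := IsGaussian.hasGaussianLaw_id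
  simpa [EuclideanSpace.inner_eq_star_dotProduct, dotProduct_comm, Function.comp_def] using
    (h.map (innerSL ℝ (WithLp.toLp 2 u))).memLp_two

variable {S}

lemma covariance_dotProduct_multivariateGaussian (hS : S.PosSemidef) :
    cov[fun x => u ⬝ᵥ x.ofLp, fun x => w ⬝ᵥ x.ofLp; multivariateGaussian c S] =
      u ⬝ᵥ S *ᵥ w := by
  have h := covarianceBilin_apply_eq_cov (μ := multivariateGaussian c S) IsGaussian.memLp_two_id
    (WithLp.toLp 2 u) (WithLp.toLp 2 w)
  rw [covarianceBilin_multivariateGaussian hS] at h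
  simpa [EuclideanSpace.inner_eq_star_dotProduct, dotProduct_comm] using h.symm

end MultivariateGaussian

section Latent

variable {ι : Type*} [Fintype ι] (μ : ι → ℝ) (S : Matrix ι ι ℝ) (w : ι → ℝ)

/-- The event that the noise `u` of a pair `(m, u)` is at most `w'm`. For a standard normal `u`
independent of `m`, its conditional probability given `m` is the probit factor `Φ(w'm)`. -/
def probitEvent : Set (EuclideanSpace ℝ ι × ℝ) := {ω | ω.2 ≤ w ⬝ᵥ ω.1.ofLp}

/-- The standard deviation of `u - w'm` for independent `m ∼ N(μ, S)` and `u ∼ N(0, 1)`. -/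
noncomputable def probitScale : ℝ := √(w ⬝ᵥ S *ᵥ w + 1)

/-- The argument `z = w'μ / √(w'Sw + 1)` for which the probit tilt has evidence `Φ(z)`. -/
noncomputable def probitIndex : ℝ := w ⬝ᵥ μ / probitScale S w

/-- The variable `u - w'm`, standardized for independent `m ∼ N(μ, S)` and `u ∼ N(0, 1)`. -/
noncomputable def probitScore (ω : EuclideanSpace ℝ ι × ℝ) : ℝ :=
  (ω.2 - w ⬝ᵥ ω.1.ofLp) / probitScale S w + probitIndex μ S w

/-- The mean of `m ∼ N(μ, S)` conditioned on `probitEvent w`. -/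
noncomputable def probitMean : ι → ℝ :=
  μ + (invMills (probitIndex μ S w) / probitScale S w) • (S *ᵥ w)

lemma measurable_probitScore : Measurable (probitScore μ S w) := by
  unfold probitScore
  fun_prop

variable {S}

lemma dotProduct_mulVec_add_one_pos (hS : S.PosSemidef) : 0 < w ⬝ᵥ S *ᵥ w + 1 := by
  have h : 0 ≤ w ⬝ᵥ S *ᵥ w := by simpa using hS.dotProduct_mulVec_nonneg w
  linarith

lemma probitScale_pos (hS : S.PosSemidef) : 0 < probitScale S w :=
  Real.sqrt_pos.2 (dotProduct_mulVec_add_one_pos w hS)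

lemma sq_probitScale (hS : S.PosSemidef) : probitScale S w ^ 2 = w ⬝ᵥ S *ᵥ w + 1 :=
  Real.sq_sqrt (dotProduct_mulVec_add_one_pos w hS).le

lemma cube_probitScale (hS : S.PosSemidef) :
    probitScale S w ^ 3 = (w ⬝ᵥ S *ᵥ w + 1) ^ ((3 : ℝ) / 2) := by
  rw [probitScale, Real.sqrt_eq_rpow, ← Real.rpow_natCast,
    ← Real.rpow_mul (dotProduct_mulVec_add_one_pos w hS).le]
  norm_num

lemma preimage_probitScore_Iic (hS : S.PosSemidef) :
    probitScore μ S w ⁻¹' Set.Iic (probitIndex μ S w) = probitEvent w := by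
  ext ω
  rw [Set.mem_preimage, Set.mem_Iic, probitScore, add_le_iff_nonpos_left,
    div_le_iff₀ (probitScale_pos w hS), zero_mul, sub_nonpos, probitEvent, Set.mem_ofPred_eq]

variable (S) [DecidableEq ι]

/-- The joint law of `(m, u)` with `m ∼ N(μ, S)` and an independent standard normal noise `u`. -/
noncomputable def latentProbit : Measure (EuclideanSpace ℝ ι × ℝ) :=
  (multivariateGaussian (WithLp.toLp 2 μ) S).prod (gaussianReal 0 1)

instance : IsProbabilityMeasure (latentProbit μ S) := by
  unfold latentProbit
  infer_instance

instance : IsGaussian (latentProbit μ S) := by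
  unfold latentProbit
  infer_instance

lemma hasGaussianLaw_ofLp_fst_probitScore :
    HasGaussianLaw (fun ω => (ω.1.ofLp, probitScore μ S w ω)) (latentProbit μ S) := by
  let π := ContinuousLinearMap.fst ℝ (EuclideanSpace ℝ ι) ℝ
  let L : EuclideanSpace ℝ ι × ℝ →L[ℝ] (ι → ℝ) × ℝ :=
    (ContinuousLinearMap.pi fun i => (EuclideanSpace.proj i).comp π).prod
      ((probitScale S w)⁻¹ • (ContinuousLinearMap.snd ℝ (EuclideanSpace ℝ ι) ℝ -
        ∑ k, w k • (EuclideanSpace.proj k).comp π))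
  have h : HasGaussianLaw id (latentProbit μ S) := IsGaussian.hasGaussianLaw_id
  convert! hasGaussianLaw_add_const (h.map L) (0, probitIndex μ S w) using 1
  ext ω <;> simp [L, π, probitScore, dotProduct, div_eq_inv_mul]

lemma memLp_dotProduct_fst (u : ι → ℝ) :
    MemLp (fun ω => u ⬝ᵥ ω.1.ofLp) 2 (latentProbit μ S) :=
  (memLp_dotProduct_multivariateGaussian S _ u).comp_fst _

lemma memLp_snd : MemLp Prod.snd 2 (latentProbit μ S) :=
  (memLp_id_gaussianReal 2).comp_snd _

lemma integral_dotProduct_fst (u : ι → ℝ) :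
    ∫ ω, u ⬝ᵥ ω.1.ofLp ∂latentProbit μ S = u ⬝ᵥ μ := by
  rw [latentProbit, integral_fun_fst (f := fun x : EuclideanSpace ℝ ι => u ⬝ᵥ x.ofLp),
    integral_dotProduct_multivariateGaussian]
  simp

lemma integral_snd : ∫ ω, ω.2 ∂latentProbit μ S = 0 := by
  rw [latentProbit, integral_fun_snd (f := fun x : ℝ => x)]
  simp

lemma integral_probitScore : ∫ ω, probitScore μ S w ω ∂latentProbit μ S = 0 := by
  have hsnd := (memLp_snd μ S).integrable one_le_two
  have hdot := (memLp_dotProduct_fst μ S w).integrable one_le_two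
  have hsub : Integrable (fun ω => ω.2 - w ⬝ᵥ ω.1.ofLp) (latentProbit μ S) := hsnd.sub hdot
  simp only [probitScore]
  rw [integral_add (hsub.div_const _) (integrable_const _), integral_div,
    integral_sub hsnd hdot, integral_snd, integral_dotProduct_fst, integral_const, probReal_univ,
    one_smul, probitIndex]
  ring

lemma variance_snd : Var[Prod.snd; latentProbit μ S] = 1 := by
  have hsnd : HasLaw Prod.snd (gaussianReal 0 1) (latentProbit μ S) :=
    measurePreserving_snd.hasLaw
  simp [hsnd.variance_eq]

lemma covariance_dotProduct_fst_snd (u : ι → ℝ) :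
    cov[fun ω => u ⬝ᵥ ω.1.ofLp, Prod.snd; latentProbit μ S] = 0 :=
  covariance_fst_snd_prod (memLp_dotProduct_multivariateGaussian S _ u) (memLp_id_gaussianReal 2)

lemma covariance_probitScore_right {X : EuclideanSpace ℝ ι × ℝ → ℝ}
    (hX : MemLp X 2 (latentProbit μ S)) :
    cov[X, probitScore μ S w; latentProbit μ S] =
      (cov[X, Prod.snd; latentProbit μ S] -
        cov[X, fun ω => w ⬝ᵥ ω.1.ofLp; latentProbit μ S]) / probitScale S w := by
  have hsub : MemLp (fun ω => ω.2 - w ⬝ᵥ ω.1.ofLp) 2 (latentProbit μ S) :=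
    (memLp_snd μ S).sub (memLp_dotProduct_fst μ S w)
  unfold probitScore
  rw [covariance_add_const_right ((hsub.integrable one_le_two).div_const _),
    covariance_fun_div_right, covariance_fun_sub_right hX (memLp_snd μ S)
      (memLp_dotProduct_fst μ S w)]

lemma covariance_snd_probitScore :
    cov[Prod.snd, probitScore μ S w; latentProbit μ S] = (probitScale S w)⁻¹ := by
  rw [covariance_probitScore_right μ S w (memLp_snd μ S), covariance_self (by fun_prop),
    variance_snd, covariance_comm, covariance_dotProduct_fst_snd, sub_zero, one_div]

variable {S}

lemma covariance_dotProduct_fst (hS : S.PosSemidef) (u : ι → ℝ) :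
    cov[fun ω => u ⬝ᵥ ω.1.ofLp, fun ω => w ⬝ᵥ ω.1.ofLp; latentProbit μ S] = u ⬝ᵥ S *ᵥ w := by
  have hfst : HasLaw Prod.fst (multivariateGaussian (WithLp.toLp 2 μ) S) (latentProbit μ S) :=
    measurePreserving_fst.hasLaw
  rw [hfst.covariance_fun_comp (f := fun x => u ⬝ᵥ x.ofLp) (g := fun x => w ⬝ᵥ x.ofLp)
    (by fun_prop) (by fun_prop), covariance_dotProduct_multivariateGaussian _ u w hS]

lemma covariance_dotProduct_fst_probitScore (hS : S.PosSemidef) (u : ι → ℝ) :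
    cov[fun ω => u ⬝ᵥ ω.1.ofLp, probitScore μ S w; latentProbit μ S] =
      -(u ⬝ᵥ S *ᵥ w / probitScale S w) := by
  rw [covariance_probitScore_right μ S w (memLp_dotProduct_fst μ S u),
    covariance_dotProduct_fst_snd, covariance_dotProduct_fst μ w hS, zero_sub, neg_div]

lemma variance_probitScore (hS : S.PosSemidef) :
    Var[probitScore μ S w; latentProbit μ S] = 1 := by
  have hσ := (probitScale_pos w hS).ne'
  rw [← covariance_self (measurable_probitScore μ S w).aemeasurable,
    covariance_probitScore_right μ S w (hasGaussianLaw_ofLp_fst_probitScore μ S w).snd.memLp_two,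
    covariance_comm, covariance_snd_probitScore, covariance_comm,
    covariance_dotProduct_fst_probitScore μ w hS]
  field_simp
  rw [sq_probitScale w hS]
  ring

lemma hasLaw_probitScore (hS : S.PosSemidef) :
    HasLaw (probitScore μ S w) (gaussianReal 0 1) (latentProbit μ S) where
  aemeasurable := (measurable_probitScore μ S w).aemeasurable
  map_eq := by
    rw [(hasGaussianLaw_ofLp_fst_probitScore μ S w).snd.map_eq_gaussianReal,
      integral_probitScore, variance_probitScore μ w hS, Real.toNNReal_one]

lemma integral_eval_cond_probitEvent (hS : S.PosSemidef) (i : ι) :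
    ∫ ω, ω.1.ofLp i ∂(latentProbit μ S)[|probitEvent w] = probitMean μ S w i := by
  have hmean := integral_dotProduct_fst μ S (Pi.single i 1)
  have hcov := covariance_dotProduct_fst_probitScore μ w hS (Pi.single i 1)
  simp only [single_one_dotProduct] at hmean hcov
  rw [← preimage_probitScore_Iic μ w hS,
    integral_cond_preimage_Iic_of_hasGaussianLaw (hasGaussianLaw_ofLp_fst_probitScore μ S w)
      (measurable_probitScore μ S w) (hasLaw_probitScore μ w hS), hmean, hcov, probitMean,
    Pi.add_apply, Pi.smul_apply, smul_eq_mul]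
  ring

lemma covariance_eval_cond_probitEvent (hS : S.PosSemidef) (i j : ι) :
    cov[fun ω => ω.1.ofLp i, fun ω => ω.1.ofLp j; (latentProbit μ S)[|probitEvent w]] =
      S i j - (S *ᵥ w) i / probitScale S w * ((S *ᵥ w) j / probitScale S w) *
        (probitIndex μ S w * invMills (probitIndex μ S w) +
          invMills (probitIndex μ S w) ^ 2) := by
  have hcov := covariance_dotProduct_fst μ (Pi.single j 1) hS (Pi.single i 1)
  have hcovScore (k : ι) := covariance_dotProduct_fst_probitScore μ w hS (Pi.single k 1)
  simp only [single_one_dotProduct, mulVec_single_one, col_apply] at hcov hcovScore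
  rw [← preimage_probitScore_Iic μ w hS,
    covariance_cond_preimage_Iic_of_hasGaussianLaw (hasGaussianLaw_ofLp_fst_probitScore μ S w)
      (measurable_probitScore μ S w) (hasLaw_probitScore μ w hS), hcov, hcovScore, hcovScore]
  ring

end Latent

section Posterior

variable {n : ℕ} (μ : Fin n → ℝ) (S : Matrix (Fin n) (Fin n) ℝ) (w : Fin n → ℝ)

/-- The posterior density `p(m) ∝ φ(m; μ, S)Φ(w'm)`. -/
noncomputable def probitPosterior (m : Fin n → ℝ) : ℝ :=
  (∫ x, mvPdf μ S x * stdCdf (w ⬝ᵥ x))⁻¹ * mvPdf μ S m * stdCdf (w ⬝ᵥ m)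

variable {S}

lemma integral_mvPdf_mul_mul_stdCdf (hS : S.PosDef) {f : (Fin n → ℝ) → ℝ} (hf : Measurable f)
    (hint : Integrable (fun x => f x.ofLp) (multivariateGaussian (WithLp.toLp 2 μ) S)) :
    ∫ m, mvPdf μ S m * (f m * stdCdf (w ⬝ᵥ m)) =
      ∫ ω in probitEvent w, f ω.1.ofLp ∂latentProbit μ S := by
  have hevent : MeasurableSet (probitEvent w) := measurableSet_le (by fun_prop) (by fun_prop)
  have hsection (x : EuclideanSpace ℝ (Fin n)) :
      Prod.mk x ⁻¹' probitEvent w = Set.Iic (w ⬝ᵥ x.ofLp) := rfl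
  have hmeas : Measurable fun m => f m * stdCdf (w ⬝ᵥ m) :=
    hf.mul (measurable_stdCdf.comp (by fun_prop))
  rw [integral_mvPdf_mul μ hS hmeas, latentProbit, setIntegral_prod_comp_fst hint hevent]
  simp only [hsection, measureReal_gaussianReal_Iic]

lemma integral_mvPdf_mul_stdCdf (hS : S.PosDef) :
    ∫ m, mvPdf μ S m * stdCdf (w ⬝ᵥ m) = (latentProbit μ S).real (probitEvent w) := by
  simpa using integral_mvPdf_mul_mul_stdCdf μ w hS (f := fun _ => 1) measurable_const
    (integrable_const _)

lemma integral_mul_probitPosterior (hS : S.PosDef) {f : (Fin n → ℝ) → ℝ} (hf : Measurable f)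
    (hint : Integrable (fun x => f x.ofLp) (multivariateGaussian (WithLp.toLp 2 μ) S)) :
    ∫ m, f m * probitPosterior μ S w m =
      ∫ ω, f ω.1.ofLp ∂(latentProbit μ S)[|probitEvent w] := by
  rw [integral_cond, smul_eq_mul, ← integral_mvPdf_mul_mul_stdCdf μ w hS hf hint,
    ← integral_mvPdf_mul_stdCdf μ w hS, ← integral_const_mul]
  exact integral_congr_ae (ae_of_all _ fun m => by simp only [probitPosterior]; ring)

lemma covariance_probitPosterior (hS : S.PosDef) (i j : Fin n) :
    ∫ m, (m i - probitMean μ S w i) * (m j - probitMean μ S w j) * probitPosterior μ S w m =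
      S i j - (probitMean μ S w i - μ i) * (probitMean μ S w j - μ j) -
        (S *ᵥ w) i * (S *ᵥ w) j * invMills (probitIndex μ S w) * (w ⬝ᵥ μ) /
          probitScale S w ^ 3 := by
  have hmem (k : Fin n) : MemLp (fun x => x.ofLp k - probitMean μ S w k) 2
      (multivariateGaussian (WithLp.toLp 2 μ) S) := by
    simpa only [single_one_dotProduct] using!
      (memLp_dotProduct_multivariateGaussian S (WithLp.toLp 2 μ) (Pi.single k 1)).sub
        (memLp_const (probitMean μ S w k))
  have hcov : ∫ ω, (ω.1.ofLp i - probitMean μ S w i) * (ω.1.ofLp j - probitMean μ S w j)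
        ∂(latentProbit μ S)[|probitEvent w] =
      cov[fun ω => ω.1.ofLp i, fun ω => ω.1.ofLp j; (latentProbit μ S)[|probitEvent w]] := by
    rw [covariance, integral_eval_cond_probitEvent μ w hS.posSemidef,
      integral_eval_cond_probitEvent μ w hS.posSemidef]
  have hshift (k : Fin n) : probitMean μ S w k - μ k =
      invMills (probitIndex μ S w) / probitScale S w * (S *ᵥ w) k := by
    rw [probitMean, Pi.add_apply, Pi.smul_apply, smul_eq_mul, add_sub_cancel_left]
  have hσ : probitScale S w ≠ 0 := (probitScale_pos w hS.posSemidef).ne'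
  have hdot : w ⬝ᵥ μ = probitIndex μ S w * probitScale S w := (div_mul_cancel₀ _ hσ).symm
  rw [integral_mul_probitPosterior μ w hS (by fun_prop) ((hmem i).integrable_mul (hmem j)),
    hcov, covariance_eval_cond_probitEvent μ w hS.posSemidef, hshift, hshift, hdot]
  field

end Posterior

theorem stmt14_general {n : ℕ} (μ : Fin n → ℝ) (S : Matrix (Fin n) (Fin n) ℝ)
    (hS : S.PosDef) (v : Fin n → ℝ)
    (y : ℝ) (hy : y = -1 ∨ y = 1)
    (z : ℝ) (hz : z = y * (v ⬝ᵥ μ) / Real.sqrt (v ⬝ᵥ (S *ᵥ v) + 1))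
    (η : ℝ) (hη : η = stdCdf z)
    (Z : ℝ) (hZ : Z = ∫ m : Fin n → ℝ, mvPdf μ S m * stdCdf (y * (v ⬝ᵥ m)))
    (p : (Fin n → ℝ) → ℝ)
    (hp : p = fun m => Z⁻¹ * mvPdf μ S m * stdCdf (y * (v ⬝ᵥ m)))
    (μplus : Fin n → ℝ)
    (hμplus : μplus = μ + (y * stdPdf z / (η * Real.sqrt (v ⬝ᵥ (S *ᵥ v) + 1))) • (S *ᵥ v)) :
    ∀ i j, (∫ m : Fin n → ℝ, (m i - μplus i) * (m j - μplus j) * p m) =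
      S i j - (μplus i - μ i) * (μplus j - μ j) -
        y * (S *ᵥ v) i * (vecMul v S) j * stdPdf z * (v ⬝ᵥ μ) /
          (η * (v ⬝ᵥ (S *ᵥ v) + 1) ^ ((3 : ℝ) / 2)) := by
  intro i j
  have hquad : (y • v) ⬝ᵥ S *ᵥ (y • v) = v ⬝ᵥ S *ᵥ v := by
    rcases hy with rfl | rfl <;> simp [mulVec_neg]
  have hσ : probitScale S (y • v) = √(v ⬝ᵥ S *ᵥ v + 1) := by rw [probitScale, hquad]
  have hindex : probitIndex μ S (y • v) = z := by
    rw [probitIndex, hσ, smul_dotProduct, smul_eq_mul, hz]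
  have hposterior : p = probitPosterior μ S (y • v) := by
    ext m
    simp only [hp, hZ, probitPosterior, smul_dotProduct, smul_eq_mul]
  have hmean : μplus = probitMean μ S (y • v) := by
    rw [hμplus, probitMean, hσ, hindex, mulVec_smul, smul_smul, invMills, hη]
    congr 2
    field
  have hsymm : (v ᵥ* S) j = (S *ᵥ v) j := by
    rw [← mulVec_transpose, ← conjTranspose_eq_transpose_of_trivial, hS.isHermitian.eq]
  rw [hposterior, hmean, covariance_probitPosterior μ (y • v) hS, hindex,
    cube_probitScale (y • v) hS.posSemidef, hquad, hsymm, invMills, hη, mulVec_smul]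
  simp only [Pi.smul_apply, smul_dotProduct, smul_eq_mul]
  rcases hy with rfl | rfl <;> ring

/-- Covariance of the probit-tilted posterior `p(m) ∝ φ(m; μ, Σ)Φ(y v'm)` equals
`Σ − (μ⁺−μ)(μ⁺−μ)' − y Σvv'Σ φ(z)(v'μ)/(η (v'Σv+1)^{3/2})`, where `μ⁺` is the
posterior mean `μ + yΣv φ(z)/(η√(v'Σv+1))`. -/
theorem stmt14 {n : ℕ} (μ : Fin n → ℝ) (S : Matrix (Fin n) (Fin n) ℝ)
    (hS : S.PosDef) (v : Fin n → ℝ) (hv : ∃ i, v = Pi.single i 1)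
    (y : ℝ) (hy : y = -1 ∨ y = 1)
    (z : ℝ) (hz : z = y * (v ⬝ᵥ μ) / Real.sqrt (v ⬝ᵥ (S *ᵥ v) + 1))
    (η : ℝ) (hη : η = stdCdf z)
    (Z : ℝ) (hZ : Z = ∫ m : Fin n → ℝ, mvPdf μ S m * stdCdf (y * (v ⬝ᵥ m)))
    (p : (Fin n → ℝ) → ℝ)
    (hp : p = fun m => Z⁻¹ * mvPdf μ S m * stdCdf (y * (v ⬝ᵥ m)))
    (μplus : Fin n → ℝ)
    (hμplus : μplus = μ + (y * stdPdf z / (η * Real.sqrt (v ⬝ᵥ (S *ᵥ v) + 1))) • (S *ᵥ v)) :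
    ∀ i j, (∫ m : Fin n → ℝ, (m i - μplus i) * (m j - μplus j) * p m) =
      S i j - (μplus i - μ i) * (μplus j - μ j) -
        y * (S *ᵥ v) i * (vecMul v S) j * stdPdf z * (v ⬝ᵥ μ) /
          (η * (v ⬝ᵥ (S *ᵥ v) + 1) ^ ((3 : ℝ) / 2)) :=
  stmt14_general μ S hS v y hy z hz η hη Z hZ p hp μplus hμplus
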